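/- arXiv:2211.11835 — 12 statements merged into one kernel-verified Lean document; each statement's English description precedes it below -/
import Mathlib

section
/- For every K with 1 < K < exp((μ₊−μ₋)²/2), the point θ* = μ₋ − (μ₊−μ₋)/(K²−1) + (K/(K²−1))·√(2(K²−1)·ln K + (μ₊−μ₋)²) lies in the open interval (μ₋, μ₊) and is the unique minimizer of the natural error E_nat over the closed interval [μ₋, μ₊]; that is, for every θ ∈ [μ₋, μ₊] with θ ≠ θ*, E_nat(θ) > E_nat(θ*). -/
/-!
The derivative of the natural error is `(φ₊ - φ₋) / 2`. Writing `d = μ₊ - μ₋`, the sign of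
`φ₊ - φ₋` at `μ₋ + u` is that of the quadratic
`q(u) = (K² - 1) u² + 2 d u - d² - 2 K² log K` (`bayesQuad`), obtained by comparing the logarithms
of the densities. It is increasing on `u ≥ 0`, negative at `u = 0`, and positive at `u = d` exactly
when `K < exp (d² / 2)`; its larger root is `θ* - μ₋`. Hence the error strictly decreases on
`[μ₋, θ*]` and strictly increases on `[θ*, μ₊]`. The error difference is expressed as an
interval integral of `φ₊ - φ₋` in `Enat_sub`, so no differentiation is needed.
-/

open Real MeasureTheory Set

/-- Density of the Gaussian N(μm, 1). -/
noncomputable def phiM (μm x : ℝ) : ℝ :=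
  (1 / Real.sqrt (2 * Real.pi)) * Real.exp (-(x - μm) ^ 2 / 2)

/-- Density of the Gaussian N(μp, K²). -/
noncomputable def phiP (μp K x : ℝ) : ℝ :=
  (1 / (Real.sqrt (2 * Real.pi) * K)) * Real.exp (-(x - μp) ^ 2 / (2 * K ^ 2))

/-- Natural error of the threshold classifier at θ. -/
noncomputable def Enat (μm μp K θ : ℝ) : ℝ :=
  (1 / 2) * (∫ x in Iic θ, phiP μp K x) + (1 / 2) * (∫ x in Ioi θ, phiM μm x)

/-- The quadratic in `u = x - μ₋` equal to `2 K²` times the log-density ratio `log (φ₊ / φ₋)`,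
where `d = μ₊ - μ₋`. -/
noncomputable def bayesQuad (d K u : ℝ) : ℝ :=
  (K ^ 2 - 1) * u ^ 2 + 2 * d * u - d ^ 2 - 2 * K ^ 2 * Real.log K

lemma phiP_eq (μm μp K x : ℝ) (hK : 0 < K) :
    phiP μp K x = phiM μm x * Real.exp (bayesQuad (μp - μm) K (x - μm) / (2 * K ^ 2)) := by
  have h : Real.exp (-(x - μp) ^ 2 / (2 * K ^ 2)) =
      K * (Real.exp (-(x - μm) ^ 2 / 2) *
        Real.exp (bayesQuad (μp - μm) K (x - μm) / (2 * K ^ 2))) := by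
    nth_rewrite 2 [← Real.exp_log hK]
    rw [← Real.exp_add, ← Real.exp_add]
    congr 1
    unfold bayesQuad
    field_simp
    ring
  unfold phiP phiM
  rw [h]
  field_simp

lemma phiM_pos (μm x : ℝ) : 0 < phiM μm x := by
  unfold phiM
  positivity

lemma phiM_lt_phiP {μm μp K x : ℝ} (hK : 0 < K) (h : 0 < bayesQuad (μp - μm) K (x - μm)) :
    phiM μm x < phiP μp K x := by
  rw [phiP_eq μm μp K x hK]
  exact lt_mul_of_one_lt_right (phiM_pos μm x) (Real.one_lt_exp_iff.2 (by positivity))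

lemma phiP_lt_phiM {μm μp K x : ℝ} (hK : 0 < K) (h : bayesQuad (μp - μm) K (x - μm) < 0) :
    phiP μp K x < phiM μm x := by
  rw [phiP_eq μm μp K x hK]
  exact mul_lt_of_lt_one_right (phiM_pos μm x)
    (Real.exp_lt_one_iff.2 (div_neg_of_neg_of_pos h (by positivity)))

lemma continuous_phiM (μm : ℝ) : Continuous (phiM μm) := by
  unfold phiM
  fun_prop

lemma continuous_phiP (μp K : ℝ) : Continuous (phiP μp K) := by
  unfold phiP
  fun_prop

lemma integrable_phiP (μp K : ℝ) (hK : 0 < K) : Integrable (phiP μp K) := by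
  have h := ((integrable_exp_neg_mul_sq (b := 1 / (2 * K ^ 2)) (by positivity)).comp_sub_right
    μp).const_mul (1 / (Real.sqrt (2 * Real.pi) * K))
  refine h.congr (Filter.Eventually.of_forall fun x => ?_)
  simp only [phiP]
  congr 2
  ring

lemma integrable_phiM (μm : ℝ) : Integrable (phiM μm) := by
  have h := integrable_phiP μm 1 one_pos
  refine h.congr (Filter.Eventually.of_forall fun x => ?_)
  simp [phiP, phiM]

lemma Enat_sub (μm μp K a b : ℝ) (hK : 0 < K) :
    Enat μm μp K b - Enat μm μp K a = (1 / 2) * ∫ x in a..b, (phiP μp K x - phiM μm x) := by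
  have hP := integrable_phiP μp K hK
  have hM := integrable_phiM μm
  have h1 := intervalIntegral.integral_Iic_sub_Iic (a := a) (b := b) hP.integrableOn hP.integrableOn
  have h2 := intervalIntegral.integral_Iic_sub_Iic (a := a) (b := b) hM.integrableOn hM.integrableOn
  have h3 := intervalIntegral.integral_Iic_add_Ioi (b := a) hM.integrableOn hM.integrableOn
  have h4 := intervalIntegral.integral_Iic_add_Ioi (b := b) hM.integrableOn hM.integrableOn
  rw [intervalIntegral.integral_sub hP.intervalIntegrable hM.intervalIntegrable]
  unfold Enat
  linarith

lemma bayesQuad_factor {d K r : ℝ} (hr : bayesQuad d K r = 0) (u : ℝ) :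
    bayesQuad d K u = (u - r) * ((K ^ 2 - 1) * (u + r) + 2 * d) := by
  have : bayesQuad d K u = bayesQuad d K u - bayesQuad d K r := by rw [hr, sub_zero]
  rw [this]
  unfold bayesQuad
  ring

theorem bayes_threshold_unique_minimizer (μm μp K : ℝ) (hμ : μm < μp)
    (hK1 : 1 < K) (hK2 : K < Real.exp ((μp - μm) ^ 2 / 2)) :
    (μm - (μp - μm) / (K ^ 2 - 1) +
        (K / (K ^ 2 - 1)) * Real.sqrt (2 * (K ^ 2 - 1) * Real.log K + (μp - μm) ^ 2))
      ∈ Ioo μm μp ∧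
    ∀ θ ∈ Icc μm μp,
      θ ≠ μm - (μp - μm) / (K ^ 2 - 1) +
        (K / (K ^ 2 - 1)) * Real.sqrt (2 * (K ^ 2 - 1) * Real.log K + (μp - μm) ^ 2) →
      Enat μm μp K
        (μm - (μp - μm) / (K ^ 2 - 1) +
          (K / (K ^ 2 - 1)) * Real.sqrt (2 * (K ^ 2 - 1) * Real.log K + (μp - μm) ^ 2))
        < Enat μm μp K θ := by
  have hK : 0 < K := by linarith
  have hK' : 0 < K ^ 2 - 1 := by nlinarith
  have hlog : 0 < Real.log K := Real.log_pos hK1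
  have hlog2 : Real.log K < (μp - μm) ^ 2 / 2 := (Real.log_lt_iff_lt_exp hK).2 hK2
  have hd : 0 < μp - μm := sub_pos.2 hμ
  set S := Real.sqrt (2 * (K ^ 2 - 1) * Real.log K + (μp - μm) ^ 2) with hS
  have hS2 : S ^ 2 = 2 * (K ^ 2 - 1) * Real.log K + (μp - μm) ^ 2 :=
    Real.sq_sqrt (by positivity)
  have hSd : μp - μm < S := Real.lt_sqrt_of_sq_lt (by nlinarith [mul_pos hK' hlog])
  set t := μm - (μp - μm) / (K ^ 2 - 1) + (K / (K ^ 2 - 1)) * S with ht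
  have htr : t - μm = (K * S - (μp - μm)) / (K ^ 2 - 1) := by
    rw [ht]
    ring
  have hr0 : 0 < t - μm := by
    rw [htr]
    exact div_pos (by nlinarith) hK'
  have hroot : bayesQuad (μp - μm) K (t - μm) = 0 := by
    have h : (K ^ 2 - 1) * (t - μm) + (μp - μm) = K * S := by
      rw [htr]
      field_simp
      ring
    -- completing the square: `(K² - 1) q(u) = ((K² - 1) u + d)² - K² S²`
    have h2 : (K ^ 2 - 1) * bayesQuad (μp - μm) K (t - μm) = 0 := by
      unfold bayesQuad
      linear_combination ((K ^ 2 - 1) * (t - μm) + (μp - μm) + K * S) * h + K ^ 2 * hS2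
    exact (mul_eq_zero.1 h2).resolve_left hK'.ne'
  have hfac := bayesQuad_factor hroot
  have hcof : ∀ u, 0 ≤ u → 0 < (K ^ 2 - 1) * (u + (t - μm)) + 2 * (μp - μm) := fun u hu => by
    have := mul_pos hK' (show 0 < u + (t - μm) by linarith)
    linarith
  have hlt : t < μp := by
    have h : 0 < bayesQuad (μp - μm) K (μp - μm) := by
      unfold bayesQuad
      nlinarith [mul_pos (sq_pos_of_pos hK) (sub_pos.2 hlog2)]
    rw [hfac] at h
    linarith [pos_of_mul_pos_left h (hcof _ hd.le).le]
  refine ⟨⟨by linarith, hlt⟩, fun θ hθ hne => ?_⟩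
  have hcont : Continuous fun x => phiP μp K x - phiM μm x :=
    (continuous_phiP μp K).sub (continuous_phiM μm)
  rcases lt_or_gt_of_ne hne with h | h
  · have hpos : 0 < ∫ x in θ..t, -(phiP μp K x - phiM μm x) := by
      refine intervalIntegral.intervalIntegral_pos_of_pos_on (hcont.neg.intervalIntegrable _ _)
        (fun x hx => ?_) h
      have : phiP μp K x < phiM μm x := by
        refine phiP_lt_phiM hK ?_
        rw [hfac]
        exact mul_neg_of_neg_of_pos (by linarith [hx.2]) (hcof _ (by linarith [hx.1, hθ.1]))
      linarith
    rw [intervalIntegral.integral_neg] at hpos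
    linarith [Enat_sub μm μp K θ t hK]
  · have hpos : 0 < ∫ x in t..θ, (phiP μp K x - phiM μm x) := by
      refine intervalIntegral.intervalIntegral_pos_of_pos_on (hcont.intervalIntegrable _ _)
        (fun x hx => ?_) h
      have : phiM μm x < phiP μp K x := by
        refine phiM_lt_phiP hK ?_
        rw [hfac]
        exact mul_pos (by linarith [hx.1]) (hcof _ (by linarith [hx.1]))
      linarith
    linarith [Enat_sub μm μp K t θ hK]
end

section
/- (Theorem 6.1, hierarchy of classifiers) Suppose 0 ≤ ε ≤ (μ₊−μ₋)/2, ln K ≤ (μ₊−μ₋−2ε)²/2, and (K+1)·ε ≤ μ₊−μ₋. Then μ₋ + ε ≤ θ_f ≤ θ* ≤ θ_r(ε) ≤ μ₊ − ε, where θ_f = μ₋ + (μ₊−μ₋)/(K+1), θ* = μ₋ − (μ₊−μ₋)/(K²−1) + (K/(K²−1))·√(2(K²−1)·ln K + (μ₊−μ₋)²), and θ_r(ε) = μ₋ − (μ₊−μ₋−(K²+1)ε)/(K²−1) + (K/(K²−1))·√(2(K²−1)·ln K + (μ₊−μ₋−2ε)²). -/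
/-!
Write `D = μp - μm`, `d = D - 2ε ≥ 0`, `S₀ = √(2(K²-1) log K + D²)` and
`S₁ = √(2(K²-1) log K + d²)`. After multiplication by `K² - 1 > 0`, the last three inequalities
reduce respectively to

* `D ≤ S₀`, which holds because `log K ≥ 0`;
* `K S₀ ≤ (K² + 1) ε + K S₁`, which follows from `S₀ ≤ S₁ + 2ε` and `2K ≤ K² + 1`;
* `S₁ ≤ K d`, which is the hypothesis `2 log K ≤ d²` after squaring.

The first inequality is the hypothesis `(K + 1) ε ≤ D`.
-/

open Real

theorem hierarchy_of_classifiers (μm μp K ε : ℝ) (hμ : μm < μp) (hK : 1 < K)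
    (hε0 : 0 ≤ ε) (hε1 : ε ≤ (μp - μm) / 2)
    (hlogK : Real.log K ≤ (μp - μm - 2 * ε) ^ 2 / 2)
    (hKε : (K + 1) * ε ≤ μp - μm) :
    μm + ε ≤ μm + (μp - μm) / (K + 1) ∧
    μm + (μp - μm) / (K + 1) ≤
      μm - (μp - μm) / (K ^ 2 - 1) +
        (K / (K ^ 2 - 1)) * Real.sqrt (2 * (K ^ 2 - 1) * Real.log K + (μp - μm) ^ 2) ∧
    μm - (μp - μm) / (K ^ 2 - 1) +
        (K / (K ^ 2 - 1)) * Real.sqrt (2 * (K ^ 2 - 1) * Real.log K + (μp - μm) ^ 2) ≤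
      μm - (μp - μm - (K ^ 2 + 1) * ε) / (K ^ 2 - 1) +
        (K / (K ^ 2 - 1)) * Real.sqrt (2 * (K ^ 2 - 1) * Real.log K + (μp - μm - 2 * ε) ^ 2) ∧
    μm - (μp - μm - (K ^ 2 + 1) * ε) / (K ^ 2 - 1) +
        (K / (K ^ 2 - 1)) * Real.sqrt (2 * (K ^ 2 - 1) * Real.log K + (μp - μm - 2 * ε) ^ 2) ≤
      μp - ε := by
  have hL : 0 < Real.log K := Real.log_pos hK
  have hA : 0 < K ^ 2 - 1 := by nlinarith
  have hK1 : 0 < K + 1 := by linarith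
  have hc : 0 < 2 * (K ^ 2 - 1) * Real.log K := by positivity
  have hd : 0 ≤ μp - μm - 2 * ε := by linarith
  set S₀ := Real.sqrt (2 * (K ^ 2 - 1) * Real.log K + (μp - μm) ^ 2) with hS₀
  set S₁ := Real.sqrt (2 * (K ^ 2 - 1) * Real.log K + (μp - μm - 2 * ε) ^ 2) with hS₁
  have hDS₀ : μp - μm ≤ S₀ := Real.le_sqrt_of_sq_le (by linarith)
  have hdS₁ : μp - μm - 2 * ε ≤ S₁ := Real.le_sqrt_of_sq_le (by linarith)
  have hS₁sq : S₁ ^ 2 = 2 * (K ^ 2 - 1) * Real.log K + (μp - μm - 2 * ε) ^ 2 :=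
    Real.sq_sqrt (by positivity)
  have hS₀S₁ : S₀ ≤ S₁ + 2 * ε := by
    refine Real.sqrt_le_iff.mpr ⟨by linarith, ?_⟩
    -- The difference of the two sides is `4ε(S₁ - d)`.
    nlinarith [mul_nonneg hε0 (sub_nonneg.mpr hdS₁)]
  have hS₁K : S₁ ≤ K * (μp - μm - 2 * ε) := by
    refine Real.sqrt_le_iff.mpr ⟨by positivity, ?_⟩
    -- The difference of the two sides is `(K² - 1)(d² - 2 log K)`.
    nlinarith [mul_le_mul_of_nonneg_left hlogK hA.le]
  refine ⟨?_, ?_, ?_, ?_⟩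
  · have : ε ≤ (μp - μm) / (K + 1) := by
      rw [le_div_iff₀ hK1]; linarith
    linarith
  · have key : (μm - (μp - μm) / (K ^ 2 - 1) + K / (K ^ 2 - 1) * S₀)
        - (μm + (μp - μm) / (K + 1)) = K * (S₀ - (μp - μm)) / (K ^ 2 - 1) := by
      field_simp
      ring
    have : 0 ≤ K * (S₀ - (μp - μm)) / (K ^ 2 - 1) :=
      div_nonneg (mul_nonneg (by linarith) (by linarith)) hA.le
    linarith
  · have key : (μm - (μp - μm - (K ^ 2 + 1) * ε) / (K ^ 2 - 1) + K / (K ^ 2 - 1) * S₁)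
        - (μm - (μp - μm) / (K ^ 2 - 1) + K / (K ^ 2 - 1) * S₀)
        = ((K - 1) ^ 2 * ε + K * (S₁ + 2 * ε - S₀)) / (K ^ 2 - 1) := by
      field_simp
      ring
    have : 0 ≤ ((K - 1) ^ 2 * ε + K * (S₁ + 2 * ε - S₀)) / (K ^ 2 - 1) :=
      div_nonneg (add_nonneg (by positivity) (mul_nonneg (by linarith) (by linarith))) hA.le
    linarith
  · have key : (μp - ε)
        - (μm - (μp - μm - (K ^ 2 + 1) * ε) / (K ^ 2 - 1) + K / (K ^ 2 - 1) * S₁)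
        = K * (K * (μp - μm - 2 * ε) - S₁) / (K ^ 2 - 1) := by
      field_simp
      ring
    have : 0 ≤ K * (K * (μp - μm - 2 * ε) - S₁) / (K ^ 2 - 1) :=
      div_nonneg (mul_nonneg (by linarith) (by linarith)) hA.le
    linarith
end

section
/- For K > 1, the function ε ↦ θ_r(ε) = μ₋ − (μ₊−μ₋−(K²+1)ε)/(K²−1) + (K/(K²−1))·√(2(K²−1)·ln K + (μ₊−μ₋−2ε)²) is strictly increasing on the interval [0, (μ₊−μ₋)/2]; indeed, at every ε ∈ [0, (μ₊−μ₋)/2) its derivative is strictly greater than (K−1)/(K+1) > 0. -/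
/-!
Write `u = μp - μm - 2ε` and `s = √(2 (K² - 1) log K + u²)`. The derivative of the threshold
in `ε` is `(K² + 1 - 2 K u / s) / (K² - 1)`. Since `log K > 0`, one has `u < s`, so the derivative
strictly exceeds `(K² + 1 - 2 K) / (K² - 1) = (K - 1) / (K + 1) > 0`. This holds at every real `ε`
(`exists_hasDerivAt_θrob`), so the threshold is strictly increasing on all of `ℝ`.
-/

open Real Set

/-- Threshold of the optimal ε-robust classifier, as a function of ε. -/
noncomputable def θrob (μm μp K ε : ℝ) : ℝ :=
  μm - (μp - μm - (K ^ 2 + 1) * ε) / (K ^ 2 - 1) +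
    (K / (K ^ 2 - 1)) * Real.sqrt (2 * (K ^ 2 - 1) * Real.log K + (μp - μm - 2 * ε) ^ 2)

/-- The derivative bound, valid without any restriction on `ε`. -/
lemma exists_hasDerivAt_θrob (μm μp K : ℝ) (hK : 1 < K) (ε : ℝ) :
    ∃ d : ℝ, HasDerivAt (fun ε => θrob μm μp K ε) d ε ∧ (K - 1) / (K + 1) < d := by
  have hK2 : 0 < K ^ 2 - 1 := by nlinarith
  have hlog : 0 < 2 * (K ^ 2 - 1) * Real.log K := by
    have := Real.log_pos hK
    positivity
  set c := 2 * (K ^ 2 - 1) * Real.log K with hc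
  set u := μp - μm - 2 * ε with hu
  have hpos : 0 < c + u ^ 2 := by positivity
  have hs : 0 < √(c + u ^ 2) := Real.sqrt_pos.mpr hpos
  have hus : u < √(c + u ^ 2) := Real.lt_sqrt_of_sq_lt (by linarith)
  have hlin : HasDerivAt (fun x : ℝ => μp - μm - 2 * x) (-2) ε := by
    simpa using ((hasDerivAt_id ε).const_mul 2).const_sub (μp - μm)
  have hsqrt := ((hlin.pow 2).const_add c).sqrt hpos.ne'
  have hfrac : HasDerivAt (fun x : ℝ => μm - (μp - μm - (K ^ 2 + 1) * x) / (K ^ 2 - 1))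
      ((K ^ 2 + 1) / (K ^ 2 - 1)) ε := by
    have h := ((((hasDerivAt_id ε).const_mul (K ^ 2 + 1)).const_sub (μp - μm)).div_const
      (K ^ 2 - 1)).const_sub μm
    exact h.congr_deriv (by ring)
  refine ⟨_, hfrac.add (hsqrt.const_mul (K / (K ^ 2 - 1))), ?_⟩
  have hquot : u / √(c + u ^ 2) < 1 := (div_lt_one hs).mpr hus
  calc (K - 1) / (K + 1) = (K ^ 2 + 1 - 2 * K * 1) / (K ^ 2 - 1) := by
        rw [div_eq_div_iff (by linarith) hK2.ne']
        ring
    _ < (K ^ 2 + 1 - 2 * K * (u / √(c + u ^ 2))) / (K ^ 2 - 1) := by gcongr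
    _ = _ := by
        simp only [Pi.pow_apply, ← hu]
        field_simp
        push_cast
        ring

theorem robust_threshold_strictMonoOn (μm μp K : ℝ) (hμ : μm < μp) (hK : 1 < K) :
    StrictMonoOn (fun ε => θrob μm μp K ε) (Icc 0 ((μp - μm) / 2)) ∧
    (0 : ℝ) < (K - 1) / (K + 1) ∧
    ∀ ε ∈ Ico (0 : ℝ) ((μp - μm) / 2),
      ∃ d : ℝ, HasDerivAt (fun ε => θrob μm μp K ε) d ε ∧ (K - 1) / (K + 1) < d := by
  have hbound : (0 : ℝ) < (K - 1) / (K + 1) := div_pos (by linarith) (by linarith)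
  refine ⟨(strictMono_of_deriv_pos fun ε => ?_).strictMonoOn _, hbound,
    fun ε _ => exists_hasDerivAt_θrob μm μp K hK ε⟩
  obtain ⟨d, hd, hlt⟩ := exists_hasDerivAt_θrob μm μp K hK ε
  rw [hd.deriv]
  exact hbound.trans hlt
end

section
/- (Corollary 6.2) Suppose 0 ≤ ε ≤ (μ₊−μ₋)/2, ln K ≤ (μ₊−μ₋−2ε)²/2, and (K+1)·ε ≤ μ₊−μ₋. Then the robust errors are ordered as E_rob(θ_f, ε) ≥ E_rob(θ*, ε) ≥ E_rob(θ_r(ε), ε), where θ_f = μ₋ + (μ₊−μ₋)/(K+1), θ* = μ₋ − (μ₊−μ₋)/(K²−1) + (K/(K²−1))·√(2(K²−1)·ln K + (μ₊−μ₋)²), and θ_r(ε) = μ₋ − (μ₊−μ₋−(K²+1)ε)/(K²−1) + (K/(K²−1))·√(2(K²−1)·ln K + (μ₊−μ₋−2ε)²). -/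
/-!
The derivative of `θ ↦ Erob μm μp K θ ε` is half of `phiP (θ + ε) - phiM (θ - ε)`, so the error is
non-increasing wherever `phiP (θ + ε) ≤ phiM (θ - ε)` (`Erob_anti`). With `v = θ - ε - μm`,
`D = μp - μm - 2 ε`, this density inequality reads
`(K² - 1) v² + 2 D v ≤ D² + 2 K² log K`, and it holds for every `v` between `0` and the positive root
of the quadratic (`phiP_le_phiM`); that positive root corresponds exactly to `θ = θrob`.

It remains to see that `μm + ε ≤ θfair ≤ θnat ≤ θrob`. The first inequality is
`(K + 1) ε ≤ μp - μm`, the second follows from `√(c + d²) ≥ d`, and the third from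
`√(c + d²) ≤ √(c + (d - 2 ε)²) + 2 ε` and `2 K ≤ K² + 1`, where `d = μp - μm` and
`c = 2 (K² - 1) log K ≥ 0`.
-/

open Real MeasureTheory Set

/-- Robust error of the threshold classifier at θ under ε-perturbations. -/
noncomputable def Erob (μm μp K θ ε : ℝ) : ℝ :=
  (1 / 2) * (∫ x in Iic (θ + ε), phiP μp K x) + (1 / 2) * (∫ x in Ioi (θ - ε), phiM μm x)

/-- Threshold of the optimal fair classifier. -/
noncomputable def θfair (μm μp K : ℝ) : ℝ := μm + (μp - μm) / (K + 1)

/-- Threshold of the optimal natural (Bayes) classifier. -/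
noncomputable def θnat (μm μp K : ℝ) : ℝ :=
  μm - (μp - μm) / (K ^ 2 - 1) +
    (K / (K ^ 2 - 1)) * Real.sqrt (2 * (K ^ 2 - 1) * Real.log K + (μp - μm) ^ 2)

lemma Erob_anti (μm μp K ε a b : ℝ) (hK : 0 < K) (hab : a ≤ b)
    (h : ∀ x ∈ Icc a b, phiP μp K (x + ε) ≤ phiM μm (x - ε)) :
    Erob μm μp K b ε ≤ Erob μm μp K a ε := by
  have iM := integrable_phiM μm
  have iP := integrable_phiP μp K hK
  have hP := intervalIntegral.integral_Iic_sub_Iic (a := a + ε) (b := b + ε)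
    iP.integrableOn iP.integrableOn
  have hM := intervalIntegral.integral_Ioi_sub_Ioi (a := a - ε) (b := b - ε)
    iM.integrableOn (by linarith)
  rw [← intervalIntegral.integral_comp_add_right (fun x => phiP μp K x)] at hP
  rw [← intervalIntegral.integral_comp_sub_right (fun x => phiM μm x)] at hM
  have hle : ∫ x in a..b, phiP μp K (x + ε) ≤ ∫ x in a..b, phiM μm (x - ε) :=
    intervalIntegral.integral_mono_on hab (iP.comp_add_right ε).intervalIntegrable
      (iM.comp_sub_right ε).intervalIntegrable h
  unfold Erob
  linarith

/-- The variable `s` stands for the square root in `θrob`, and the hypothesis `hx1` says `x ≤ θrob`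
with the denominator `K ^ 2 - 1` cleared. -/
lemma phiP_le_phiM (μm μp K ε x s : ℝ) (hK : 1 < K) (hD : 0 ≤ μp - μm - 2 * ε)
    (hs : s ^ 2 = 2 * (K ^ 2 - 1) * Real.log K + (μp - μm - 2 * ε) ^ 2)
    (hx0 : 0 ≤ x - ε - μm)
    (hx1 : (K ^ 2 - 1) * (x - ε - μm) + (μp - μm - 2 * ε) ≤ K * s) :
    phiP μp K (x + ε) ≤ phiM μm (x - ε) := by
  have hK0 : 0 < K := by linarith
  have hK1 : 0 < K ^ 2 - 1 := by nlinarith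
  have hexp : phiP μp K (x + ε) = (1 / Real.sqrt (2 * Real.pi)) *
      Real.exp (-Real.log K + -(x + ε - μp) ^ 2 / (2 * K ^ 2)) := by
    rw [Real.exp_add, Real.exp_neg, Real.exp_log hK0, phiP, one_div_mul_eq_div, one_div_mul_eq_div]
    have : 0 < Real.sqrt (2 * Real.pi) := by positivity
    field_simp
  rw [hexp, phiM]
  gcongr
  obtain ⟨v, hv⟩ : ∃ v, v = x - ε - μm := ⟨_, rfl⟩
  obtain ⟨D, hDD⟩ : ∃ D, D = μp - μm - 2 * ε := ⟨_, rfl⟩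
  have e1 : x + ε - μp = v - D := by rw [hv, hDD]; ring
  rw [← hDD] at hD hs hx1
  rw [← hv] at hx0 hx1 ⊢
  rw [e1]
  have hsq : ((K ^ 2 - 1) * v + D) ^ 2 ≤ (K * s) ^ 2 := by
    apply pow_le_pow_left₀ _ hx1
    positivity
  have hq : (K ^ 2 - 1) * (K ^ 2 * v ^ 2 - (v - D) ^ 2) ≤ (K ^ 2 - 1) * (2 * K ^ 2 * Real.log K) := by
    rw [mul_pow, hs] at hsq
    linarith
  have hq' := le_of_mul_le_mul_left hq hK1
  have e2 : -v ^ 2 / 2 - (-Real.log K + -(v - D) ^ 2 / (2 * K ^ 2))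
      = (2 * K ^ 2 * Real.log K - (K ^ 2 * v ^ 2 - (v - D) ^ 2)) / (2 * K ^ 2) := by
    field_simp
    ring
  have : 0 ≤ (2 * K ^ 2 * Real.log K - (K ^ 2 * v ^ 2 - (v - D) ^ 2)) / (2 * K ^ 2) :=
    div_nonneg (by linarith) (by positivity)
  linarith

theorem robust_error_ordering (μm μp K ε : ℝ) (hμ : μm < μp) (hK : 1 < K)
    (hε0 : 0 ≤ ε) (hε1 : ε ≤ (μp - μm) / 2)
    (hlogK : Real.log K ≤ (μp - μm - 2 * ε) ^ 2 / 2)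
    (hKε : (K + 1) * ε ≤ μp - μm) :
    Erob μm μp K (θrob μm μp K ε) ε ≤ Erob μm μp K (θnat μm μp K) ε ∧
    Erob μm μp K (θnat μm μp K) ε ≤ Erob μm μp K (θfair μm μp K) ε := by
  have hK0 : 0 < K := by linarith
  have hK1 : 0 < K ^ 2 - 1 := by nlinarith
  have hD : 0 ≤ μp - μm - 2 * ε := by linarith
  have hc : 0 ≤ 2 * (K ^ 2 - 1) * Real.log K :=
    mul_nonneg (by linarith) (Real.log_nonneg hK.le)
  obtain ⟨s, hs⟩ : ∃ s, s = Real.sqrt (2 * (K ^ 2 - 1) * Real.log K + (μp - μm - 2 * ε) ^ 2) :=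
    ⟨_, rfl⟩
  obtain ⟨t, ht⟩ : ∃ t, t = Real.sqrt (2 * (K ^ 2 - 1) * Real.log K + (μp - μm) ^ 2) := ⟨_, rfl⟩
  have hs2 : s ^ 2 = 2 * (K ^ 2 - 1) * Real.log K + (μp - μm - 2 * ε) ^ 2 := by
    rw [hs, Real.sq_sqrt (by positivity)]
  have hsD : μp - μm - 2 * ε ≤ s := by
    rw [hs]; exact Real.le_sqrt_of_sq_le (by linarith)
  have htD : μp - μm ≤ t := by
    rw [ht]; exact Real.le_sqrt_of_sq_le (by linarith)
  have hts : t ≤ s + 2 * ε := by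
    rw [ht]
    apply Real.sqrt_le_iff.mpr ⟨by linarith, ?_⟩
    nlinarith [mul_le_mul_of_nonneg_left hsD hε0]
  have hr : (K ^ 2 - 1) * (θrob μm μp K ε - ε - μm) + (μp - μm - 2 * ε) = K * s := by
    rw [θrob, ← hs]; field_simp; ring
  have hn : (K ^ 2 - 1) * (θnat μm μp K - μm) + (μp - μm) = K * t := by
    rw [θnat, ← ht]; field_simp; ring
  have hf : (K + 1) * (θfair μm μp K - μm) = μp - μm := by
    rw [θfair]; field_simp; ring
  have h1 : ε + μm ≤ θfair μm μp K := by
    have : (K + 1) * ε ≤ (K + 1) * (θfair μm μp K - μm) := by rw [hf]; exact hKε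
    linarith [le_of_mul_le_mul_left this (by linarith)]
  have h2 : θfair μm μp K ≤ θnat μm μp K := by
    refine le_of_mul_le_mul_left ?_ hK1
    have e : (K ^ 2 - 1) * (θfair μm μp K - μm) = (K - 1) * (μp - μm) := by
      rw [← hf]; ring
    linarith [mul_le_mul_of_nonneg_left htD hK0.le]
  have h3 : θnat μm μp K ≤ θrob μm μp K ε := by
    refine le_of_mul_le_mul_left ?_ hK1
    linarith [mul_le_mul_of_nonneg_left hts hK0.le, mul_nonneg hε0 (sq_nonneg (K - 1))]
  have key : ∀ x, θfair μm μp K ≤ x → x ≤ θrob μm μp K ε →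
      phiP μp K (x + ε) ≤ phiM μm (x - ε) := by
    intro x hx hx'
    refine phiP_le_phiM μm μp K ε x s hK hD hs2 (by linarith) ?_
    linarith [mul_le_mul_of_nonneg_left hx' hK1.le]
  exact ⟨Erob_anti μm μp K ε _ _ hK0 h3 fun x hx => key x (h2.trans hx.1) hx.2,
    Erob_anti μm μp K ε _ _ hK0 h2 fun x hx => key x hx.1 (hx.2.trans h3)⟩
end

section
/- Suppose 0 ≤ ε ≤ (μ₊−μ₋)/4, ln K ≤ (μ₊−μ₋−2ε)²/2, and (K + 1/K + 2)·ε ≤ μ₊−μ₋. Then the map θ ↦ E_bdy(θ,ε) is monotonically nonincreasing (antitone) on the interval [θ_f, θ_r(ε)], where θ_f = μ₋ + (μ₊−μ₋)/(K+1) and θ_r(ε) = μ₋ − (μ₊−μ₋−(K²+1)ε)/(K²−1) + (K/(K²−1))·√(2(K²−1)·ln K + (μ₊−μ₋−2ε)²). -/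
/-!
Up to the factor `1/2`, the derivative of the boundary error in `θ` is
`(φ₊(θ+ε) - φ₊(θ)) - (φ₋(θ-ε) - φ₋(θ))`. Writing `φ₊(θ) = φ₊(θ+ε) e^{-a}` and
`φ₋(θ) = φ₋(θ-ε) e^{-b}`, it equals `φ₊(θ+ε)(1 - e^{-a}) - φ₋(θ-ε)(1 - e^{-b})`, so it is
nonpositive as soon as `φ₊(θ+ε) ≤ φ₋(θ-ε)`, `a ≤ b` and `0 ≤ b`.

The first inequality holds because `θ_r(ε)` is the larger root of the quadratic (in `θ`) obtained
by comparing the logarithms of `φ₊(θ+ε)` and `φ₋(θ-ε)`, and `θ_f` lies to the right of its vertex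
(`quadratic_le`). The other two are linear in `θ` and follow from `θ ≥ θ_f` and
`(K + 1/K + 2) ε ≤ μ₊ - μ₋`.
-/

open Real MeasureTheory Set

/-- Boundary error of the threshold classifier at θ under ε-perturbations. -/
noncomputable def Ebdy (μm μp K θ ε : ℝ) : ℝ :=
  (1 / 2) * (∫ x in Ioc θ (θ + ε), phiP μp K x) +
    (1 / 2) * (∫ x in Ioc (θ - ε) θ, phiM μm x)

lemma hasDerivAt_Ebdy (μm μp K ε θ : ℝ) (hε0 : 0 ≤ ε) :
    HasDerivAt (fun θ => Ebdy μm μp K θ ε)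
      (1 / 2 * (phiP μp K (θ + ε) - phiP μp K θ) +
        1 / 2 * (phiM μm θ - phiM μm (θ - ε))) θ := by
  have hP := continuous_phiP μp K
  have hM := continuous_phiM μm
  have e : (fun θ => Ebdy μm μp K θ ε) = fun θ =>
      1 / 2 * ((∫ x in (0 : ℝ)..(θ + ε), phiP μp K x) - ∫ x in (0 : ℝ)..θ, phiP μp K x) +
      1 / 2 * ((∫ x in (0 : ℝ)..θ, phiM μm x) - ∫ x in (0 : ℝ)..(θ - ε), phiM μm x) := by
    funext t
    rw [Ebdy, intervalIntegral.integral_interval_sub_left (hP.intervalIntegrable _ _)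
        (hP.intervalIntegrable _ _),
      intervalIntegral.integral_interval_sub_left (hM.intervalIntegrable _ _)
        (hM.intervalIntegrable _ _),
      intervalIntegral.integral_of_le (by linarith), intervalIntegral.integral_of_le (by linarith)]
  rw [e]
  have dP (y : ℝ) := hP.integral_hasStrictDerivAt 0 y |>.hasDerivAt
  have dM (y : ℝ) := hM.integral_hasStrictDerivAt 0 y |>.hasDerivAt
  exact ((((dP (θ + ε)).comp_add_const θ ε).sub (dP θ)).const_mul _).add
    (((dM θ).sub ((dM (θ - ε)).comp_sub_const θ ε)).const_mul _)

/-- The density comparison follows from the comparison of logarithms. -/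
lemma phiP_le_phiM_s7 {μm μp K x y : ℝ} (hK : 1 < K)
    (h : (x - μm) ^ 2 / 2 ≤ (y - μp) ^ 2 / (2 * K ^ 2) + Real.log K) :
    phiP μp K y ≤ phiM μm x := by
  have hK0 : 0 < K := by linarith
  have e : phiP μp K y = 1 / √(2 * π) * rexp (-(y - μp) ^ 2 / (2 * K ^ 2) - Real.log K) := by
    rw [phiP, Real.exp_sub, Real.exp_log hK0]
    field_simp
  rw [e, phiM]
  gcongr
  rw [neg_div, neg_div]
  linarith

/-- The comparison needed in `phiP_le_phiM` at the shifted points holds between the vertex of the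
quadratic (hypothesis `hv`) and its larger root `θrob`. -/
lemma quadratic_le {μm μp K ε θ : ℝ} (hK : 1 < K)
    (hv : 0 ≤ K ^ 2 * (θ - ε - μm) - (θ + ε - μp)) (hθ : θ ≤ θrob μm μp K ε) :
    (θ - ε - μm) ^ 2 / 2 ≤ (θ + ε - μp) ^ 2 / (2 * K ^ 2) + Real.log K := by
  have hK0 : 0 < K := by linarith
  have hK1 : 0 < K ^ 2 - 1 := by nlinarith
  have hS : 0 ≤ 2 * (K ^ 2 - 1) * Real.log K + (μp - μm - 2 * ε) ^ 2 := by
    have := Real.log_pos hK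
    positivity
  have hle : K ^ 2 * (θ - ε - μm) - (θ + ε - μp) ≤
      K * √(2 * (K ^ 2 - 1) * Real.log K + (μp - μm - 2 * ε) ^ 2) := by
    have h := mul_le_mul_of_nonneg_left hθ hK1.le
    have e : (K ^ 2 - 1) * θrob μm μp K ε = (K ^ 2 - 1) * μm - (μp - μm - (K ^ 2 + 1) * ε)
        + K * √(2 * (K ^ 2 - 1) * Real.log K + (μp - μm - 2 * ε) ^ 2) := by
      rw [θrob]
      field_simp
    linarith
  have hsq := pow_le_pow_left₀ hv hle 2
  rw [mul_pow, Real.sq_sqrt hS] at hsq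
  -- With `A = θ-ε-μm`, `B = θ+ε-μp`: `(K²A - B)² - K²(A - B)² = (K² - 1)(K²A² - B²)`.
  have hAB : (K ^ 2 - 1) * (K ^ 2 * (θ - ε - μm) ^ 2) ≤
      (K ^ 2 - 1) * ((θ + ε - μp) ^ 2 + 2 * K ^ 2 * Real.log K) := by
    linarith
  have hAB' := le_of_mul_le_mul_left hAB hK1
  rw [div_add' _ _ _ (by positivity), div_le_div_iff₀ (by norm_num) (by positivity)]
  linarith

lemma deriv_Ebdy_nonpos {μm μp K ε θ : ℝ} (hK : 1 < K) (hε0 : 0 ≤ ε)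
    (hKε : (K + 1 / K + 2) * ε ≤ μp - μm)
    (h1 : θfair μm μp K ≤ θ) (h2 : θ ≤ θrob μm μp K ε) :
    1 / 2 * (phiP μp K (θ + ε) - phiP μp K θ) +
        1 / 2 * (phiM μm θ - phiM μm (θ - ε)) ≤ 0 := by
  have hK0 : 0 < K := by linarith
  have hKε' : (K + 1) ^ 2 * ε ≤ K * (μp - μm) := by
    have h := mul_le_mul_of_nonneg_left hKε hK0.le
    have e : K * ((K + 1 / K + 2) * ε) = (K + 1) ^ 2 * ε := by field_simp; ring
    linarith
  have hf : μp - μm ≤ (K + 1) * (θ - μm) := by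
    have h : (μp - μm) / (K + 1) ≤ θ - μm := by rw [θfair] at h1; linarith
    rw [div_le_iff₀ (by linarith)] at h
    linarith
  have hb0 : ε ≤ θ - μm := by
    have : K * (K + 1) * ε ≤ K * (K + 1) * (θ - μm) := by nlinarith [mul_nonneg hK0.le hε0]
    exact le_of_mul_le_mul_left this (by positivity)
  have hf' := mul_le_mul_of_nonneg_left hf (by linarith : 0 ≤ K - 1)
  have hv : 0 ≤ K ^ 2 * (θ - ε - μm) - (θ + ε - μp) := by
    nlinarith [mul_nonneg hK0.le hε0]
  have hdom : phiP μp K (θ + ε) ≤ phiM μm (θ - ε) := phiP_le_phiM_s7 hK (quadratic_le hK hv h2)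
  set a := ε * (2 * (μp - θ) - ε) / (2 * K ^ 2) with ha
  set b := ε * (2 * (θ - μm) - ε) / 2 with hb
  have hPa : phiP μp K θ = phiP μp K (θ + ε) * rexp (-a) := by
    rw [phiP, phiP, mul_assoc, ← Real.exp_add, ha]
    congr 2
    field_simp
    ring
  have hMb : phiM μm θ = phiM μm (θ - ε) * rexp (-b) := by
    rw [phiM, phiM, mul_assoc, ← Real.exp_add, hb]
    congr 2
    ring
  have hbnn : 0 ≤ b := by
    rw [hb]
    have : 0 ≤ 2 * (θ - μm) - ε := by linarith
    positivity
  have hab : a ≤ b := by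
    have hlin : 2 * (μp - θ) - ε ≤ K ^ 2 * (2 * (θ - μm) - ε) := by
      have h : (K + 1) * (2 * (μp - θ) - ε) ≤ (K + 1) * (K ^ 2 * (2 * (θ - μm) - ε)) := by
        have h3 := mul_le_mul_of_nonneg_left hf (by positivity : 0 ≤ K ^ 2 + 1)
        have h4 := mul_le_mul_of_nonneg_left hKε' (by linarith : 0 ≤ K - 1)
        have h5 : 0 ≤ (K - 1) * ((K + 1) ^ 2 * ε) :=
          mul_nonneg (by linarith) (by positivity)
        linarith
      exact le_of_mul_le_mul_left h (by linarith)
    rw [ha, hb, div_le_div_iff₀ (by positivity) (by norm_num)]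
    have := mul_le_mul_of_nonneg_left hlin hε0
    linarith
  have hP0 : 0 ≤ phiP μp K (θ + ε) := by unfold phiP; positivity
  have hexp : rexp (-b) ≤ rexp (-a) := Real.exp_le_exp.mpr (by linarith)
  have hexp1 : rexp (-b) ≤ 1 := Real.exp_le_one_iff.mpr (by linarith)
  rw [hPa, hMb]
  have s1 := mul_le_mul_of_nonneg_left hexp hP0
  have s2 := mul_le_mul_of_nonneg_right hdom (sub_nonneg.mpr hexp1)
  linarith

theorem boundary_error_antitone (μm μp K ε : ℝ) (hμ : μm < μp) (hK : 1 < K)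
    (hε0 : 0 ≤ ε) (hε1 : ε ≤ (μp - μm) / 4)
    (hlogK : Real.log K ≤ (μp - μm - 2 * ε) ^ 2 / 2)
    (hKε : (K + 1 / K + 2) * ε ≤ μp - μm) :
    AntitoneOn (fun θ => Ebdy μm μp K θ ε) (Icc (θfair μm μp K) (θrob μm μp K ε)) := by
  have hd (θ : ℝ) := hasDerivAt_Ebdy μm μp K ε θ hε0
  refine antitoneOn_of_deriv_nonpos (convex_Icc _ _)
    (fun θ _ => (hd θ).continuousAt.continuousWithinAt)
    (fun θ _ => (hd θ).differentiableAt.differentiableWithinAt) fun θ hθ => ?_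
  rw [(hd θ).deriv]
  have hθ' := interior_subset hθ
  exact deriv_Ebdy_nonpos hK hε0 hKε hθ'.1 hθ'.2
end

section
/- (Proposition A.1) Define g(ε;θ) = exp(−(θ+ε−μ₊)²/(2K²))/K − exp(−(θ−ε−μ₋)²/2). Suppose 0 ≤ ε ≤ (μ₊−μ₋)/4, ln K ≤ (μ₊−μ₋−2ε)²/2, (K + 1/K + 2)·ε ≤ μ₊−μ₋, and θ_f ≤ θ ≤ θ_r(ε), where θ_f = μ₋ + (μ₊−μ₋)/(K+1) and θ_r(ε) = μ₋ − (μ₊−μ₋−(K²+1)ε)/(K²−1) + (K/(K²−1))·√(2(K²−1)·ln K + (μ₊−μ₋−2ε)²). Then g(ε;θ) ≤ g(0;θ). -/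
/-!
Put `x = θ - μm` and `y = μp - θ`, and write `g(e) = A(e) - B(e)` with
`A(e) = exp(-(y - e)² / (2K²)) / K` and `B(e) = exp(-(x - e)² / 2)`.
Then `A(0) = A(ε) exp(-p)` and `B(0) = B(ε) exp(-q)` with `p = ε(2y - ε) / (2K²)` and
`q = ε(2x - ε) / 2`, so the claim reads `A(ε) (1 - exp(-p)) ≤ B(ε) (1 - exp(-q))`.

The upper bound `θ ≤ θrob` says that `x - ε` lies below the larger root of the quadratic expressing
`A(ε) = B(ε)`, whence `A(ε) ≤ B(ε)` (`robust_quadratic`). The lower bound `θfair ≤ θ` says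
`y ≤ K x`, and with the bound on `(K + 1/K + 2) ε` it gives `p ≤ q` and `0 ≤ q`. Hence
`A(ε) (1 - exp(-p)) ≤ A(ε) (1 - exp(-q)) ≤ B(ε) (1 - exp(-q))`.
-/

open Real

/-- The auxiliary function g from Proposition A.1. -/
noncomputable def gAux (μm μp K θ ε : ℝ) : ℝ :=
  Real.exp (-(θ + ε - μp) ^ 2 / (2 * K ^ 2)) / K - Real.exp (-(θ - ε - μm) ^ 2 / 2)

/-- Here `u = x - ε` and `d = μp - μm - 2ε`; the hypothesis `h` is the bound `θ ≤ θrob`, and the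
conclusion is the comparison of the exponents in `A(ε) ≤ B(ε)`. -/
lemma robust_quadratic {K u d : ℝ} (hK : 1 < K) (hu : 0 ≤ u) (hd : 0 ≤ d)
    (h : (K ^ 2 - 1) * u + d ≤ K * √(2 * (K ^ 2 - 1) * log K + d ^ 2)) :
    K ^ 2 * u ^ 2 - (d - u) ^ 2 ≤ 2 * K ^ 2 * log K := by
  have hK2 : 0 < K ^ 2 - 1 := by nlinarith
  have hlog : 0 < log K := log_pos hK
  have hS : 0 ≤ 2 * (K ^ 2 - 1) * log K + d ^ 2 := by positivity
  have hsq := pow_le_pow_left₀ (by positivity) h 2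
  rw [mul_pow, sq_sqrt hS] at hsq
  -- Up to rearrangement, `hsq` is the conclusion multiplied by `K ^ 2 - 1`.
  refine le_of_mul_le_mul_left ?_ hK2
  nlinarith

theorem gAux_le_of_mem (μm μp K ε θ : ℝ) (hμ : μm < μp) (hK : 1 < K)
    (hε0 : 0 ≤ ε) (hε1 : ε ≤ (μp - μm) / 4)
    (hlogK : Real.log K ≤ (μp - μm - 2 * ε) ^ 2 / 2)
    (hKε : (K + 1 / K + 2) * ε ≤ μp - μm)
    (hθ1 : θfair μm μp K ≤ θ) (hθ2 : θ ≤ θrob μm μp K ε) :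
    gAux μm μp K θ ε ≤ gAux μm μp K θ 0 := by
  have hK0 : 0 < K := by linarith
  have hK2 : 0 < K ^ 2 - 1 := by nlinarith
  obtain ⟨x, rfl⟩ : ∃ x, θ = μm + x := ⟨θ - μm, by ring⟩
  obtain ⟨y, rfl⟩ : ∃ y, μp = μm + x + y := ⟨μp - (μm + x), by ring⟩
  have hfair : x + y ≤ (K + 1) * x := by
    unfold θfair at hθ1
    have h1 : (x + y) / (K + 1) ≤ x := by
      have : (μm + x + y - μm) / (K + 1) = (x + y) / (K + 1) := by ring
      linarith
    rw [div_le_iff₀ (by linarith)] at h1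
    linarith
  -- `K + 1/K + 2 = (K + 1)² / K`, so the hypothesis `hKε` cancels against `hfair`.
  have hx : (K + 1) * ε ≤ K * x := by
    have h1 : (K + 1 / K + 2) * ε = (K + 1) * ((K + 1) * ε) / K := by
      field_simp
      ring
    rw [h1, div_le_iff₀ hK0] at hKε
    refine le_of_mul_le_mul_left ?_ (show 0 < K + 1 by linarith)
    nlinarith
  have hxε : ε ≤ x := by
    refine le_of_mul_le_mul_left ?_ hK0
    nlinarith
  have hquad : K ^ 2 * (x - ε) ^ 2 - (y - ε) ^ 2 ≤ 2 * K ^ 2 * log K := by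
    have h := robust_quadratic (u := x - ε) (d := x + y - 2 * ε) hK (by linarith) (by linarith) ?_
    · convert h using 3
      ring
    · unfold θrob at hθ2
      rw [show μm + x + y - μm = x + y by ring] at hθ2
      set s := √(2 * (K ^ 2 - 1) * log K + (x + y - 2 * ε) ^ 2)
      have h2 : x ≤ (K * s - (x + y - (K ^ 2 + 1) * ε)) / (K ^ 2 - 1) := by
        have : (K * s - (x + y - (K ^ 2 + 1) * ε)) / (K ^ 2 - 1)
          = K / (K ^ 2 - 1) * s - (x + y - (K ^ 2 + 1) * ε) / (K ^ 2 - 1) := by ring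
        linarith
      rw [le_div_iff₀ hK2] at h2
      nlinarith
  have hAB : exp (-(y - ε) ^ 2 / (2 * K ^ 2)) / K ≤ exp (-(x - ε) ^ 2 / 2) := by
    rw [div_le_iff₀ hK0]
    nth_rewrite 2 [← exp_log hK0]
    rw [← exp_add, exp_le_exp, div_le_iff₀ (by positivity)]
    nlinarith
  have hq : 0 ≤ ε * (2 * x - ε) / 2 := by
    have := mul_nonneg hε0 (show 0 ≤ 2 * x - ε by linarith)
    linarith
  have hpq : ε * (2 * y - ε) / (2 * K ^ 2) ≤ ε * (2 * x - ε) / 2 := by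
    have h1 : (K - 1) * ((K + 1) * ε) ≤ (K - 1) * (K * x) :=
      mul_le_mul_of_nonneg_left hx (by linarith)
    have h2 : 0 ≤ (K - 1) * (K * x) := by
      have : 0 ≤ x := by linarith
      have : 0 ≤ K - 1 := by linarith
      positivity
    have h3 : 2 * y - ε ≤ K ^ 2 * (2 * x - ε) := by nlinarith
    rw [div_le_iff₀ (by positivity)]
    nlinarith [mul_le_mul_of_nonneg_left h3 hε0]
  have hA0 : exp (-y ^ 2 / (2 * K ^ 2)) / K
      = exp (-(y - ε) ^ 2 / (2 * K ^ 2)) / K * exp (-(ε * (2 * y - ε) / (2 * K ^ 2))) := by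
    rw [div_mul_eq_mul_div, ← exp_add]
    congr 2
    ring
  have hB0 : exp (-x ^ 2 / 2) = exp (-(x - ε) ^ 2 / 2) * exp (-(ε * (2 * x - ε) / 2)) := by
    rw [← exp_add]
    congr 1
    ring
  have hgε : gAux μm (μm + x + y) K (μm + x) ε
      = exp (-(y - ε) ^ 2 / (2 * K ^ 2)) / K - exp (-(x - ε) ^ 2 / 2) := by
    unfold gAux
    congr 4 <;> ring
  have hg0 : gAux μm (μm + x + y) K (μm + x) 0
      = exp (-y ^ 2 / (2 * K ^ 2)) / K - exp (-x ^ 2 / 2) := by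
    unfold gAux
    congr 4 <;> ring
  rw [hgε, hg0, hA0, hB0]
  have hApos : 0 ≤ exp (-(y - ε) ^ 2 / (2 * K ^ 2)) / K := by positivity
  have he : exp (-(ε * (2 * x - ε) / 2)) ≤ exp (-(ε * (2 * y - ε) / (2 * K ^ 2))) :=
    exp_le_exp.mpr (by linarith)
  have he1 : exp (-(ε * (2 * x - ε) / 2)) ≤ 1 := exp_le_one_iff.mpr (by linarith)
  nlinarith [mul_le_mul_of_nonneg_left he hApos,
    mul_le_mul_of_nonneg_right hAB (sub_nonneg.mpr he1)]
end

section
/- (Proposition A.3) Define q(θ;ε) = (θ−ε−μ₋)² − (μ₊−θ−ε)²/K² and θ_r(ε) = μ₋ − (μ₊−μ₋−(K²+1)ε)/(K²−1) + (K/(K²−1))·√(2(K²−1)·ln K + (μ₊−μ₋−2ε)²). Suppose 0 ≤ ε ≤ (μ₊−μ₋)/2 and ln K ≤ (μ₊−μ₋−2ε)²/2. Then q(θ_r(ε);ε) = 2·ln K; equivalently, exp(−(θ_r(ε)+ε−μ₊)²/(2K²)) = K·exp(−(θ_r(ε)−ε−μ₋)²/2). -/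
/-!
Put `d = μp - μm - 2ε` and `s = √(2 (K² - 1) log K + d²)`. At the robust threshold `θ` one has
`θ - ε - μm = (K s - d) / (K² - 1)` and `μp - θ - ε = K (K d - s) / (K² - 1)`, so
`q = ((K s - d)² - (K d - s)²) / (K² - 1)² = (s² - d²) / (K² - 1) = 2 log K`. The radicand is
nonnegative because `K > 1`, which is what allows `s²` to be evaluated. Writing
`K = exp (log K)`, the exponential identity is this equation divided by two.
-/

open Real

/-- The auxiliary function q from Proposition A.2. -/
noncomputable def qAux (μm μp K θ ε : ℝ) : ℝ :=
  (θ - ε - μm) ^ 2 - (μp - θ - ε) ^ 2 / K ^ 2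

theorem qAux_at_robust_threshold (μm μp K ε : ℝ) (hμ : μm < μp) (hK : 1 < K)
    (hε0 : 0 ≤ ε) (hε1 : ε ≤ (μp - μm) / 2)
    (hlogK : Real.log K ≤ (μp - μm - 2 * ε) ^ 2 / 2) :
    qAux μm μp K (θrob μm μp K ε) ε = 2 * Real.log K ∧
    Real.exp (-(θrob μm μp K ε + ε - μp) ^ 2 / (2 * K ^ 2)) =
      K * Real.exp (-(θrob μm μp K ε - ε - μm) ^ 2 / 2) := by
  have hK2 : K ^ 2 - 1 ≠ 0 := by nlinarith
  have hK0 : K ≠ 0 := by linarith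
  have hlog : 0 ≤ Real.log K := Real.log_nonneg hK.le
  have hrad : 0 ≤ 2 * (K ^ 2 - 1) * Real.log K + (μp - μm - 2 * ε) ^ 2 := by
    have : 0 ≤ K ^ 2 - 1 := by nlinarith
    positivity
  have hq : qAux μm μp K (θrob μm μp K ε) ε = 2 * Real.log K := by
    have hs := Real.sq_sqrt hrad
    unfold qAux θrob
    set s := Real.sqrt (2 * (K ^ 2 - 1) * Real.log K + (μp - μm - 2 * ε) ^ 2)
    have hx : μm - (μp - μm - (K ^ 2 + 1) * ε) / (K ^ 2 - 1) + K / (K ^ 2 - 1) * s - ε - μm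
        = (K * s - (μp - μm - 2 * ε)) / (K ^ 2 - 1) := by
      field_simp
      ring
    have hy : μp - (μm - (μp - μm - (K ^ 2 + 1) * ε) / (K ^ 2 - 1) + K / (K ^ 2 - 1) * s) - ε
        = K * (K * (μp - μm - 2 * ε) - s) / (K ^ 2 - 1) := by
      field_simp
      ring
    rw [hx, hy]
    -- The cross terms cancel, leaving `(s² - d²) / (K² - 1)`.
    have key : ((K * s - (μp - μm - 2 * ε)) / (K ^ 2 - 1)) ^ 2
        - (K * (K * (μp - μm - 2 * ε) - s) / (K ^ 2 - 1)) ^ 2 / K ^ 2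
        = (s ^ 2 - (μp - μm - 2 * ε) ^ 2) / (K ^ 2 - 1) := by
      field_simp
      ring
    rw [key, hs]
    field_simp
    ring
  refine ⟨hq, ?_⟩
  unfold qAux at hq
  generalize θrob μm μp K ε = θ at hq ⊢
  have hexp : -(θ + ε - μp) ^ 2 / (2 * K ^ 2) = Real.log K + -(θ - ε - μm) ^ 2 / 2 := by
    have hL : Real.log K = ((θ - ε - μm) ^ 2 - (μp - θ - ε) ^ 2 / K ^ 2) / 2 := by linarith
    rw [hL]
    field_simp
    ring
  rw [hexp, Real.exp_add, Real.exp_log (by linarith)]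
end

section
/- (Proposition A.4) Define p(θ;ε) = ln((θ−ε−μ₋)²) − ln((μ₊−θ−ε)²/K²) and θ_f = μ₋ + (μ₊−μ₋)/(K+1). Suppose 0 ≤ ε ≤ (μ₊−μ₋)/4 and (K + 1/K + 2)·ε ≤ μ₊−μ₋. Then p(θ_f;ε) ≥ −2·ln K. -/
/-!
Write `d = μp - μm` and `t = d / (K + 1)`. At the fair threshold the two distances entering `pAux`
are `t - ε` and `K * t - ε`, so the claim amounts to `K * t - ε ≤ K ^ 2 * (t - ε)` with both sides
positive. After division by `K - 1` this inequality is `(K + 1) * ε ≤ K * t`, which is the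
hypothesis `(K + 1 / K + 2) * ε ≤ d` because `K + 1 / K + 2 = (K + 1) ^ 2 / K`. The same bound
gives `ε < t`, hence the positivity of both logarithm arguments.
-/

open Real

/-- The auxiliary function p from Proposition A.2. -/
noncomputable def pAux (μm μp K θ ε : ℝ) : ℝ :=
  Real.log ((θ - ε - μm) ^ 2) - Real.log ((μp - θ - ε) ^ 2 / K ^ 2)

theorem pAux_at_fair_threshold (μm μp K ε : ℝ) (hμ : μm < μp) (hK : 1 < K)
    (hε0 : 0 ≤ ε) (hε1 : ε ≤ (μp - μm) / 4)
    (hKε : (K + 1 / K + 2) * ε ≤ μp - μm) :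
    pAux μm μp K (θfair μm μp K) ε ≥ -(2 * Real.log K) := by
  set d := μp - μm with hd
  have hd0 : 0 < d := sub_pos.mpr hμ
  have hK0 : 0 < K := by linarith
  -- The hypothesis on `K` and `ε` with the denominator cleared.
  have hmain : (K + 1) ^ 2 * ε ≤ K * d := by
    have h := mul_le_mul_of_nonneg_left hKε hK0.le
    have e : K * ((K + 1 / K + 2) * ε) = (K + 1) ^ 2 * ε := by
      field_simp
      ring
    linarith
  obtain ⟨t, ht⟩ : ∃ t, t = d / (K + 1) := ⟨_, rfl⟩
  have htd : d = (K + 1) * t := by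
    rw [ht]
    field_simp
  have ht0 : 0 < t := by
    rw [ht]
    positivity
  have hεt : (K + 1) * ε ≤ K * t := by
    rw [htd] at hmain
    have : (K + 1) * ((K + 1) * ε) ≤ (K + 1) * (K * t) := by linarith
    exact le_of_mul_le_mul_left this (by linarith)
  have ha : 0 < t - ε := by
    by_contra h
    nlinarith
  have hb : 0 < K * t - ε := by nlinarith
  have hab : K * t - ε ≤ K ^ 2 * (t - ε) := by
    nlinarith [mul_nonneg (sub_nonneg.mpr hK.le) (sub_nonneg.mpr hεt)]
  have e1 : θfair μm μp K - ε - μm = t - ε := by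
    rw [θfair, ← hd, ← ht]
    ring
  have e2 : μp - θfair μm μp K - ε = K * t - ε := by
    rw [θfair, ← hd, ← ht]
    linarith
  rw [pAux, e1, e2, Real.log_div (by positivity) (by positivity)]
  simp only [Real.log_pow]
  have hlog := Real.log_le_log hb hab
  rw [Real.log_mul (by positivity) ha.ne', Real.log_pow] at hlog
  push_cast at hlog ⊢
  linarith
end

section
/- (Theorem 6.4, first part) Suppose 0 ≤ ε ≤ (μ₊−μ₋)/2, ln K ≤ (μ₊−μ₋−2ε)²/2, and (K+1)·ε ≤ μ₊−μ₋. Then the average distances to the decision boundary are ordered as D(θ_r(ε)) ≥ D(θ*) ≥ D(θ_f), where θ_f = μ₋ + (μ₊−μ₋)/(K+1), θ* = μ₋ − (μ₊−μ₋)/(K²−1) + (K/(K²−1))·√(2(K²−1)·ln K + (μ₊−μ₋)²), and θ_r(ε) = μ₋ − (μ₊−μ₋−(K²+1)ε)/(K²−1) + (K/(K²−1))·√(2(K²−1)·ln K + (μ₊−μ₋−2ε)²). -/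
/-!
Write `d = μp - μm`, `a = d / (K + 1)` and `t = θ - θfair`. Since `θfair - μm = a` and
`μp - θfair = K * a`, standardizing both Gaussians (and reflecting the one centred at `μm`) turns
`2 * avgDist θ` into a single expectation over a standard normal `z`,
`E (|K * (z + a) - t| + |z + a + t|)`.
For each fixed `z` the integrand is nondecreasing in `t ≥ 0`, because one of the two absolute
values grows at unit rate while the other changes at most at unit rate. Hence `avgDist` is
nondecreasing on `[θfair, ∞)` (`avgDist_mono`), and it remains to order the thresholds:
`θfair ≤ θnat` since the square root in `θnat` is at least `d`, and `θnat ≤ θrob` since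
`x ↦ √(c + x ^ 2)` is 1-Lipschitz and `2 * K ≤ K ^ 2 + 1`.
-/

open Real MeasureTheory Set

/-- Average distance to the decision boundary of the threshold classifier at θ. -/
noncomputable def avgDist (μm μp K θ : ℝ) : ℝ :=
  (1 / 2) * (∫ x : ℝ, |x - θ| * phiP μp K x) + (1 / 2) * (∫ x : ℝ, |x - θ| * phiM μm x)

lemma integrable_abs_affine_mul_phiM (a b : ℝ) :
    Integrable (fun z : ℝ => |a * z + b| * phiM 0 z) := by
  have h1 := integrable_mul_exp_neg_mul_sq (b := 1 / 2) (by norm_num)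
  have h2 := integrable_exp_neg_mul_sq (b := 1 / 2) (by norm_num)
  have h3 := (((h1.const_mul a).add (h2.const_mul b)).abs).const_mul (1 / √(2 * π))
  refine h3.congr (Filter.Eventually.of_forall fun z => ?_)
  have e : -(z - 0) ^ 2 / 2 = -(1 / 2) * z ^ 2 := by ring
  simp only [Pi.add_apply, phiM, e]
  rw [← mul_assoc, ← mul_assoc, ← add_mul, abs_mul, abs_of_pos (Real.exp_pos _)]
  ring

lemma integral_phiP_standardize (μp K θ : ℝ) (hK : 0 < K) :
    ∫ x : ℝ, |x - θ| * phiP μp K x = ∫ z : ℝ, |K * z + (μp - θ)| * phiM 0 z := by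
  have h1 := integral_add_right_eq_self (μ := volume) (fun x : ℝ => |x - θ| * phiP μp K x) μp
  have h2 := Measure.integral_comp_mul_left
    (fun y : ℝ => |y + μp - θ| * phiP μp K (y + μp)) K
  rw [abs_of_pos (inv_pos.mpr hK), smul_eq_mul, h1] at h2
  have h3 : ∫ x : ℝ, |x - θ| * phiP μp K x
      = K * ∫ z : ℝ, |K * z + μp - θ| * phiP μp K (K * z + μp) := by
    rw [h2]; field_simp
  rw [h3, ← integral_const_mul]
  refine integral_congr_ae (Filter.Eventually.of_forall fun z => ?_)
  have e : -(K * z + μp - μp) ^ 2 / (2 * K ^ 2) = -(z - 0) ^ 2 / 2 := by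
    field_simp; ring
  have hs : √(2 * π) ≠ 0 := by positivity
  simp only [phiP, phiM, e]
  rw [add_sub_assoc]
  field_simp

/-- Besides centring, the variable is reflected, so that the two Gaussian terms of `avgDist` can be
compared pointwise. -/
lemma integral_phiM_standardize (μm θ : ℝ) :
    ∫ x : ℝ, |x - θ| * phiM μm x = ∫ z : ℝ, |1 * z + (θ - μm)| * phiM 0 z := by
  rw [← integral_sub_left_eq_self (fun x : ℝ => |x - θ| * phiM μm x) volume μm]
  refine integral_congr_ae (Filter.Eventually.of_forall fun z => ?_)
  have e : -(μm - z - μm) ^ 2 / 2 = -(z - 0) ^ 2 / 2 := by ring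
  have e' : μm - z - θ = -(1 * z + (θ - μm)) := by ring
  simp only [phiM, e, e', abs_neg]

lemma abs_add_abs_mono (K u s t : ℝ) (hK : 0 < K) (hs : 0 ≤ s) (hst : s ≤ t) :
    |K * u - s| + |u + s| ≤ |K * u - t| + |u + t| := by
  rcases le_total 0 u with hu | hu
  · rw [abs_of_nonneg (by linarith : 0 ≤ u + s), abs_of_nonneg (by linarith : 0 ≤ u + t)]
    have := abs_sub_le (K * u) t s
    rw [abs_of_nonneg (by linarith : 0 ≤ t - s)] at this
    linarith
  · have hKu : K * u ≤ 0 := mul_nonpos_of_nonneg_of_nonpos hK.le hu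
    rw [abs_of_nonpos (by linarith : K * u - s ≤ 0), abs_of_nonpos (by linarith : K * u - t ≤ 0)]
    have := abs_sub_le (u + s) (u + t) 0
    rw [abs_of_nonpos (by linarith : u + s - (u + t) ≤ 0)] at this
    simp only [sub_zero] at this
    linarith

lemma avgDist_mono (μm μp K θ₁ θ₂ : ℝ) (hK : 0 < K)
    (h1 : θfair μm μp K ≤ θ₁) (h2 : θ₁ ≤ θ₂) :
    avgDist μm μp K θ₁ ≤ avgDist μm μp K θ₂ := by
  have key : ∀ θ, avgDist μm μp K θ = (1 / 2) *
      ∫ z : ℝ, (|K * z + (μp - θ)| * phiM 0 z + |1 * z + (θ - μm)| * phiM 0 z) := by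
    intro θ
    rw [avgDist, integral_phiP_standardize _ _ _ hK, integral_phiM_standardize,
      integral_add (integrable_abs_affine_mul_phiM _ _) (integrable_abs_affine_mul_phiM _ _)]
    ring
  rw [key, key]
  refine mul_le_mul_of_nonneg_left (integral_mono
    ((integrable_abs_affine_mul_phiM _ _).add (integrable_abs_affine_mul_phiM _ _))
    ((integrable_abs_affine_mul_phiM _ _).add (integrable_abs_affine_mul_phiM _ _))
    fun z => ?_) (by norm_num)
  have hφ : 0 ≤ phiM 0 z := by unfold phiM; positivity
  have hm := abs_add_abs_mono K (z + (μp - μm) / (K + 1)) (θ₁ - θfair μm μp K)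
    (θ₂ - θfair μm μp K) hK (by linarith) (by linarith)
  have eK : ∀ θ, K * (z + (μp - μm) / (K + 1)) - (θ - θfair μm μp K) = K * z + (μp - θ) := by
    intro θ; unfold θfair; field_simp; ring
  have e1 : ∀ θ, z + (μp - μm) / (K + 1) + (θ - θfair μm μp K) = 1 * z + (θ - μm) := by
    intro θ; unfold θfair; ring
  rw [eK, eK, e1, e1] at hm
  simp only [← add_mul]
  exact mul_le_mul_of_nonneg_right hm hφ

lemma θfair_le_θnat (μm μp K : ℝ) (hK : 1 < K) :
    θfair μm μp K ≤ θnat μm μp K := by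
  have hK2 : 0 < K ^ 2 - 1 := by nlinarith
  have hl : 0 ≤ Real.log K := Real.log_nonneg hK.le
  have hs : μp - μm ≤ √(2 * (K ^ 2 - 1) * Real.log K + (μp - μm) ^ 2) := by
    apply Real.le_sqrt_of_sq_le
    have : 0 ≤ 2 * (K ^ 2 - 1) * Real.log K := by positivity
    linarith
  have e : θfair μm μp K = μm - (μp - μm) / (K ^ 2 - 1) + K / (K ^ 2 - 1) * (μp - μm) := by
    have : K ^ 2 - 1 = (K - 1) * (K + 1) := by ring
    have h1 : K - 1 ≠ 0 := by linarith
    have h2 : K + 1 ≠ 0 := by linarith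
    unfold θfair
    rw [this]; field_simp; ring
  rw [e, θnat]
  have : 0 ≤ K / (K ^ 2 - 1) := by positivity
  have := mul_le_mul_of_nonneg_left hs this
  linarith

lemma θnat_le_θrob (μm μp K ε : ℝ) (hK : 1 < K) (hε0 : 0 ≤ ε) (hε1 : ε ≤ (μp - μm) / 2) :
    θnat μm μp K ≤ θrob μm μp K ε := by
  have hK2 : 0 < K ^ 2 - 1 := by nlinarith
  have hl : 0 ≤ Real.log K := Real.log_nonneg hK.le
  have hc : 0 ≤ 2 * (K ^ 2 - 1) * Real.log K := by positivity
  unfold θnat θrob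
  set c := 2 * (K ^ 2 - 1) * Real.log K
  set S := √(c + (μp - μm - 2 * ε) ^ 2) with hS
  have hSS : S ^ 2 = c + (μp - μm - 2 * ε) ^ 2 := Real.sq_sqrt (by positivity)
  have hS0 : μp - μm - 2 * ε ≤ S := Real.le_sqrt_of_sq_le (by linarith)
  have hlip : √(c + (μp - μm) ^ 2) ≤ S + 2 * ε :=
    Real.sqrt_le_iff.mpr ⟨by linarith, by nlinarith [mul_le_mul_of_nonneg_left hS0 hε0]⟩
  have hmain : K * √(c + (μp - μm) ^ 2) ≤ K * S + (K ^ 2 + 1) * ε := by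
    have h1 := mul_le_mul_of_nonneg_left hlip (by linarith : 0 ≤ K)
    have h2 := mul_nonneg (sq_nonneg (K - 1)) hε0
    nlinarith
  have h := div_le_div_of_nonneg_right hmain hK2.le
  have e1 : K / (K ^ 2 - 1) * √(c + (μp - μm) ^ 2) = K * √(c + (μp - μm) ^ 2) / (K ^ 2 - 1) := by
    ring
  have e2 : -(μp - μm - (K ^ 2 + 1) * ε) / (K ^ 2 - 1) + K / (K ^ 2 - 1) * S
      = -(μp - μm) / (K ^ 2 - 1) + (K * S + (K ^ 2 + 1) * ε) / (K ^ 2 - 1) := by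
    ring
  rw [neg_div, neg_div] at e2
  rw [e1]
  linarith

theorem avg_distance_ordering (μm μp K ε : ℝ) (hμ : μm < μp) (hK : 1 < K)
    (hε0 : 0 ≤ ε) (hε1 : ε ≤ (μp - μm) / 2)
    (hlogK : Real.log K ≤ (μp - μm - 2 * ε) ^ 2 / 2)
    (hKε : (K + 1) * ε ≤ μp - μm) :
    avgDist μm μp K (θfair μm μp K) ≤ avgDist μm μp K (θnat μm μp K) ∧
    avgDist μm μp K (θnat μm μp K) ≤ avgDist μm μp K (θrob μm μp K ε) := by
  have h1 := θfair_le_θnat μm μp K hK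
  exact ⟨avgDist_mono _ _ _ _ _ (by linarith) le_rfl h1,
    avgDist_mono _ _ _ _ _ (by linarith) h1 (θnat_le_θrob μm μp K ε hK hε0 hε1)⟩
end

section
/- For every θ ∈ ℝ, the average distance to the decision boundary D is differentiable at θ with derivative D′(θ) = Φ(θ−μ₋) − Φ((μ₊−θ)/K), where Φ(t) = (1/√(2π))·∫_{−∞}^{t} exp(−s²/2) ds is the standard normal cumulative distribution function. -/
/-!
Both densities are affine images of the standard normal density `phiM 0`: substituting
`x = K * s + μ` gives `∫ |x - θ| φ₊(x) dx = K * A ((θ - μ) / K)` with `A t = ∫ |s - t| φ(s) ds`,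
and `φ₋` is the case `K = 1`. The integrand of `A` is Lipschitz in `t` with the integrable constant
`φ(s)` and differentiable for `s ≠ t`, so dominated differentiation gives
`A' t = P(S ≤ t) - P(S > t) = 2 Φ(t) - 1`. The chain rule and the symmetry `Φ(t) + Φ(-t) = 1`,
used for the wide Gaussian, yield the formula.
-/


open Real MeasureTheory Set

/-- The standard normal cumulative distribution function. -/
noncomputable def stdNormalCdf (t : ℝ) : ℝ :=
  (1 / Real.sqrt (2 * Real.pi)) * ∫ s in Iic t, Real.exp (-s ^ 2 / 2)

lemma phiM_zero_eq (s : ℝ) :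
    phiM 0 s = (1 / Real.sqrt (2 * Real.pi)) * Real.exp (-(1 / 2) * s ^ 2) := by
  unfold phiM
  congr 2
  ring

lemma phiM_zero_nonneg (s : ℝ) : 0 ≤ phiM 0 s := by
  unfold phiM
  positivity

lemma integrable_phiM_zero : Integrable (phiM 0) := by
  rw [funext phiM_zero_eq]
  exact (integrable_exp_neg_mul_sq (by norm_num)).const_mul _

lemma integral_phiM_zero : ∫ s, phiM 0 s = 1 := by
  have hpos : 0 < Real.sqrt (2 * Real.pi) := by positivity
  simp_rw [phiM_zero_eq]
  rw [integral_const_mul, integral_gaussian, show Real.pi / (1 / 2) = 2 * Real.pi by ring]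
  field_simp

lemma integrable_abs_sub_mul_phiM_zero (t : ℝ) :
    Integrable (fun s => |s - t| * phiM 0 s) := by
  have h1 : Integrable (fun s => s * phiM 0 s) := by
    refine ((integrable_mul_exp_neg_mul_sq (b := 1 / 2) (by norm_num)).const_mul
      (1 / Real.sqrt (2 * Real.pi))).congr (ae_of_all _ fun s => ?_)
    simp only [phiM_zero_eq]
    ring
  refine ((h1.sub (integrable_phiM_zero.const_mul t)).abs).congr (ae_of_all _ fun s => ?_)
  simp only [Pi.sub_apply, ← sub_mul, abs_mul, abs_of_nonneg (phiM_zero_nonneg s)]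

lemma stdNormalCdf_eq (t : ℝ) : stdNormalCdf t = ∫ s in Iic t, phiM 0 s := by
  unfold stdNormalCdf phiM
  rw [integral_const_mul]
  simp

lemma stdNormalCdf_add_integral_Ioi (t : ℝ) :
    stdNormalCdf t + ∫ s in Ioi t, phiM 0 s = 1 := by
  rw [stdNormalCdf_eq, ← integral_phiM_zero, ← compl_Iic]
  exact integral_add_compl measurableSet_Iic integrable_phiM_zero

lemma stdNormalCdf_neg (t : ℝ) : stdNormalCdf (-t) = 1 - stdNormalCdf t := by
  have h : stdNormalCdf (-t) = ∫ s in Ioi t, phiM 0 s := by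
    have h2 := integral_comp_neg_Iic (-t) (phiM 0)
    rw [neg_neg] at h2
    rw [stdNormalCdf_eq, ← h2]
    simp [phiM]
  linarith [stdNormalCdf_add_integral_Ioi t]

/-- The derivative of the mean absolute deviation of a standard normal variable from `t` is
`P(S ≤ t) - P(S > t)`. -/
lemma hasDerivAt_integral_abs_sub (t : ℝ) :
    HasDerivAt (fun t => ∫ s, |s - t| * phiM 0 s) (2 * stdNormalCdf t - 1) t := by
  have hind : Integrable (fun s => (Iic t).indicator (phiM 0) s) :=
    integrable_phiM_zero.indicator measurableSet_Iic
  -- `2 * 1_{s ≤ t} - 1` is the derivative of `t ↦ |s - t|` away from `s = t`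
  have key := hasDerivAt_integral_of_dominated_loc_of_lip (𝕜 := ℝ) (μ := volume)
    (F := fun t s => |s - t| * phiM 0 s) (x₀ := t) (s := univ) (bound := phiM 0)
    (F' := fun s => 2 * (Iic t).indicator (phiM 0) s - phiM 0 s) Filter.univ_mem
    (Filter.Eventually.of_forall fun t => (integrable_abs_sub_mul_phiM_zero t).1)
    (integrable_abs_sub_mul_phiM_zero t)
    ((hind.const_mul 2).sub integrable_phiM_zero).1 ?_ integrable_phiM_zero ?_
  · refine key.2.congr_deriv ?_
    rw [integral_sub (hind.const_mul 2) integrable_phiM_zero, integral_const_mul,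
      integral_indicator measurableSet_Iic, integral_phiM_zero, stdNormalCdf_eq]
  · refine ae_of_all _ fun s => LipschitzOnWith.of_dist_le_mul fun x _ y _ => ?_
    rw [Real.dist_eq, Real.dist_eq, ← sub_mul, abs_mul, Real.coe_nnabs, mul_comm]
    refine mul_le_mul_of_nonneg_left ?_ (abs_nonneg _)
    have h := abs_abs_sub_abs_le (s - x) (s - y)
    rwa [show s - x - (s - y) = -(x - y) by ring, abs_neg] at h
  · have hne : ∀ᵐ s : ℝ, s ≠ t := by simp [ae_iff]
    filter_upwards [hne] with s hs
    have hd : HasDerivAt (fun t : ℝ => s - t) (-1) t := by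
      simpa using (hasDerivAt_id t).const_sub s
    rcases lt_or_gt_of_ne hs with h | h
    · refine (((hasDerivAt_abs_neg (sub_neg.2 h)).comp t hd).mul_const (phiM 0 s)).congr_deriv ?_
      rw [indicator_of_mem (show s ∈ Iic t from h.le)]
      ring
    · refine (((hasDerivAt_abs_pos (sub_pos.2 h)).comp t hd).mul_const (phiM 0 s)).congr_deriv ?_
      rw [indicator_of_notMem (show s ∉ Iic t from not_le.2 h)]
      ring

lemma integral_abs_sub_mul_phiP (μ K θ : ℝ) (hK : 0 < K) :
    ∫ x, |x - θ| * phiP μ K x = K * ∫ s, |s - (θ - μ) / K| * phiM 0 s := by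
  have h1 : ∀ x, |x - θ| * phiP μ K x
      = (fun s => |s - (θ - μ) / K| * phiM 0 s) ((x - μ) / K) := by
    intro x
    have hx : (x - μ) / K - (θ - μ) / K = (x - θ) / K := by ring
    have he : -((x - μ) / K - 0) ^ 2 / 2 = -(x - μ) ^ 2 / (2 * K ^ 2) := by
      field_simp
      ring
    simp only [phiP, phiM, hx, he, abs_div, abs_of_pos hK]
    field_simp
  simp_rw [h1]
  rw [integral_sub_right_eq_self
    (fun x => (fun s => |s - (θ - μ) / K| * phiM 0 s) (x / K)) μ,
    Measure.integral_comp_div (fun s => |s - (θ - μ) / K| * phiM 0 s) K, abs_of_pos hK, smul_eq_mul]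

lemma hasDerivAt_integral_phiP (μ K θ : ℝ) (hK : 0 < K) :
    HasDerivAt (fun θ => ∫ x, |x - θ| * phiP μ K x)
      (2 * stdNormalCdf ((θ - μ) / K) - 1) θ := by
  simp_rw [integral_abs_sub_mul_phiP μ K _ hK]
  have hd : HasDerivAt (fun θ : ℝ => (θ - μ) / K) (1 / K) θ :=
    ((hasDerivAt_id θ).sub_const μ).div_const K
  refine (((hasDerivAt_integral_abs_sub ((θ - μ) / K)).comp θ hd).const_mul K).congr_deriv ?_
  field_simp

theorem avgDist_hasDerivAt (μm μp K : ℝ) (hμ : μm < μp) (hK : 1 < K) :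
    ∀ θ : ℝ, HasDerivAt (fun θ => avgDist μm μp K θ)
      (stdNormalCdf (θ - μm) - stdNormalCdf ((μp - θ) / K)) θ := by
  intro θ
  have hM : phiM μm = phiP μm 1 := by
    funext x
    simp [phiM, phiP]
  unfold avgDist
  rw [hM]
  refine (((hasDerivAt_integral_phiP μp K θ (by linarith)).const_mul (1 / 2)).add
    ((hasDerivAt_integral_phiP μm 1 θ one_pos).const_mul (1 / 2))).congr_deriv ?_
  rw [show (μp - θ) / K = -((θ - μp) / K) by ring, stdNormalCdf_neg, div_one]
  ring
end

section
/- Define h(θ) = exp(−(θ−μ₊)²/(2K²)) − K·exp(−(θ−μ₋)²/2). For every K with 1 < K < exp((μ₊−μ₋)²/2): h is strictly increasing on [μ₋, μ₊], h(μ₋) < 0, and h(μ₊) > 0; consequently h has a unique zero in (μ₋, μ₊). -/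
/-!
On `[μm, μp]` the exponent `-(θ - μp)² / (2K²)` increases and `-(θ - μm)² / 2` decreases strictly,
so `hAux` is a strictly increasing function minus a strictly decreasing one. At `μm` the first
exponential is at most `1 < K`, and at `μp` it is `1`, while `K * exp (-(μp - μm)² / 2) < 1` is
the upper bound on `K`. The zero comes from the intermediate value theorem.
-/

open Real Set

/-- The function h, proportional to the derivative of the natural error. -/
noncomputable def hAux (μm μp K θ : ℝ) : ℝ :=
  Real.exp (-(θ - μp) ^ 2 / (2 * K ^ 2)) - K * Real.exp (-(θ - μm) ^ 2 / 2)

theorem hAux_strictMono_and_unique_zero (μm μp K : ℝ) (hμ : μm < μp)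
    (hK1 : 1 < K) (hK2 : K < Real.exp ((μp - μm) ^ 2 / 2)) :
    StrictMonoOn (fun θ => hAux μm μp K θ) (Icc μm μp) ∧
    hAux μm μp K μm < 0 ∧
    0 < hAux μm μp K μp ∧
    ∃! θ : ℝ, θ ∈ Ioo μm μp ∧ hAux μm μp K θ = 0 := by
  have hK0 : 0 < K := by linarith
  have hmono : StrictMonoOn (fun θ => hAux μm μp K θ) (Icc μm μp) := by
    intro a ha b hb hab
    obtain ⟨ha1, ha2⟩ := ha
    obtain ⟨hb1, hb2⟩ := hb
    have h1 : Real.exp (-(a - μp) ^ 2 / (2 * K ^ 2)) < Real.exp (-(b - μp) ^ 2 / (2 * K ^ 2)) := by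
      apply Real.exp_lt_exp.mpr
      apply div_lt_div_of_pos_right _ (by positivity)
      nlinarith
    have h2 : Real.exp (-(b - μm) ^ 2 / 2) < Real.exp (-(a - μm) ^ 2 / 2) := by
      apply Real.exp_lt_exp.mpr
      nlinarith
    have h3 := mul_lt_mul_of_pos_left h2 hK0
    simp only [hAux]
    linarith
  have hneg : hAux μm μp K μm < 0 := by
    have h1 : Real.exp (-(μm - μp) ^ 2 / (2 * K ^ 2)) ≤ 1 := by
      apply Real.exp_le_one_iff.mpr
      apply div_nonpos_of_nonpos_of_nonneg _ (by positivity)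
      nlinarith [sq_nonneg (μm - μp)]
    simp only [hAux, sub_self]
    norm_num
    linarith
  have hpos : 0 < hAux μm μp K μp := by
    have h1 := mul_lt_mul_of_pos_right hK2 (Real.exp_pos (-(μp - μm) ^ 2 / 2))
    rw [← Real.exp_add, neg_div, add_neg_cancel, Real.exp_zero, ← neg_div] at h1
    simp only [hAux, sub_self]
    norm_num
    exact h1
  refine ⟨hmono, hneg, hpos, ?_⟩
  have hcont : ContinuousOn (fun θ => hAux μm μp K θ) (Icc μm μp) := by
    unfold hAux
    fun_prop
  obtain ⟨θ, hθ, h0⟩ := intermediate_value_Ioo hμ.le hcont ⟨hneg, hpos⟩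
  refine ⟨θ, ⟨hθ, h0⟩, ?_⟩
  rintro y ⟨hy, hy0⟩
  exact hmono.injOn (Ioo_subset_Icc_self hy) (Ioo_subset_Icc_self hθ) (hy0.trans h0.symm)
end

section
/- For every K > 1, θ* − θ_f = K·(√(2(K²−1)·ln K + (μ₊−μ₋)²) − (μ₊−μ₋))/(K²−1), and this quantity is strictly positive; hence θ* > θ_f, where θ_f = μ₋ + (μ₊−μ₋)/(K+1) and θ* = μ₋ − (μ₊−μ₋)/(K²−1) + (K/(K²−1))·√(2(K²−1)·ln K + (μ₊−μ₋)²). -/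
/-!
Since `1 / (K + 1) = (K - 1) / (K ^ 2 - 1)`, both thresholds share the denominator `K ^ 2 - 1`, and
the terms in `μp - μm` combine to `-K * (μp - μm)`, which gives the formula for the difference.
It is positive because `log K > 0` makes the radicand larger than `(μp - μm) ^ 2`.
-/

open Real

theorem bayes_minus_fair_positive (μm μp K : ℝ) (hμ : μm < μp) (hK : 1 < K) :
    θnat μm μp K - θfair μm μp K =
      K * (Real.sqrt (2 * (K ^ 2 - 1) * Real.log K + (μp - μm) ^ 2) - (μp - μm)) /
        (K ^ 2 - 1) ∧
    0 < K * (Real.sqrt (2 * (K ^ 2 - 1) * Real.log K + (μp - μm) ^ 2) - (μp - μm)) /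
        (K ^ 2 - 1) ∧
    θfair μm μp K < θnat μm μp K := by
  have hK2 : 0 < K ^ 2 - 1 := by nlinarith
  have hlog : 0 < Real.log K := Real.log_pos hK
  have hdiff : θnat μm μp K - θfair μm μp K =
      K * (Real.sqrt (2 * (K ^ 2 - 1) * Real.log K + (μp - μm) ^ 2) - (μp - μm)) /
        (K ^ 2 - 1) := by
    have hK1 : K + 1 ≠ 0 := by linarith
    -- Over the common denominator `K ^ 2 - 1`, the fair term is `(μp - μm) * (K - 1)`.
    have hfrac : (μp - μm) / (K + 1) = (μp - μm) * (K - 1) / (K ^ 2 - 1) := by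
      rw [div_eq_div_iff hK1 hK2.ne']
      ring
    unfold θnat θfair
    rw [hfrac]
    ring
  -- The logarithmic term is positive, so the root exceeds `√((μp - μm) ^ 2) = μp - μm`.
  have hsqrt : μp - μm <
      Real.sqrt (2 * (K ^ 2 - 1) * Real.log K + (μp - μm) ^ 2) := by
    apply Real.lt_sqrt_of_sq_lt
    have : 0 < 2 * (K ^ 2 - 1) * Real.log K := by positivity
    linarith
  have hpos : 0 < K *
      (Real.sqrt (2 * (K ^ 2 - 1) * Real.log K + (μp - μm) ^ 2) - (μp - μm)) /
        (K ^ 2 - 1) :=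
    div_pos (mul_pos (by linarith) (sub_pos.mpr hsqrt)) hK2
  exact ⟨hdiff, hpos, sub_pos.mp (hdiff ▸ hpos)⟩
end
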